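/- For all integers l₁, l₂ ≥ 0 and m₁ ∈ {−l₁,…,l₁}, m₂ ∈ {−l₂,…,l₂}, the spherical-surface integral F_{13}(l₁, m₁, l₂, m₂) = ∫_{S²} n₁ n₃ Y_{l₁}^{m₁}(n) Y_{l₂}^{m₂}(n) dn satisfies F_{13}(l₁, m₁, l₂, m₂) = ( (−1)^{m₂+1}/√2 ) Σ_{k,j,l ∈ {0,1}} (−1)^{l+j} η_{δ_{0k}+(−1)^k l₂, m₂}^{0} · η_{(−1)^j l₁ + δ_{0j}, m₁}^{(−1)^l} · δ_{l₁+δ_{1k}−δ_{1j}, l₂−δ_{1k}+δ_{1j}} · δ_{m₁+(−1)^l, −m₂}, where n₁ and n₃ are the first and third components of the unit vector n and δ denotes the Kronecker delta. -/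

import Mathlib

open MeasureTheory Real
open scoped BigOperators Classical

noncomputable section

/-- Velocity space ℝ³. -/
abbrev V3 := Fin 3 → ℝ

/-- Euclidean norm |v| on ℝ³. -/
def nrm (v : V3) : ℝ := Real.sqrt (∑ i, v i ^ 2)

/-- The (normalized) Maxwellian M(v) = (2π)^{-3/2} exp(-|v|²/2). -/
def Mxw (v : V3) : ℝ := (2 * π) ^ (-(3 : ℝ) / 2) * Real.exp (-(∑ i, v i ^ 2) / 2)

/-- |α| = α₁ + α₂ + α₃ for a multi-index. -/
def degIdx (α : Fin 3 → ℕ) : ℕ := α 0 + α 1 + α 2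

/-- α! = α₁! α₂! α₃! for a multi-index. -/
def multiFact (α : Fin 3 → ℕ) : ℕ := (α 0).factorial * (α 1).factorial * (α 2).factorial

/-- Multidimensional Hermite polynomial
`H^α(v) = ((-1)^{|α|}/M(v)) ∂^{|α|} M(v) / ∂v₁^{α₁} ∂v₂^{α₂} ∂v₃^{α₃}`. -/
def Herm (α : Fin 3 → ℕ) (v : V3) : ℝ :=
  ((-1 : ℝ) ^ degIdx α / Mxw v) *
    iteratedDeriv (α 0) (fun x1 =>
      iteratedDeriv (α 1) (fun x2 =>
        iteratedDeriv (α 2) (fun x3 => Mxw ![x1, x2, x3]) (v 2)) (v 1)) (v 0)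

/-- Partial derivative ∂f/∂vᵢ. -/
def pd (i : Fin 3) (f : V3 → ℝ) (v : V3) : ℝ := fderiv ℝ f v (Pi.single i 1)

/-- Divergence of a vector field on ℝ³. -/
def div3 (F : V3 → V3) (v : V3) : ℝ := ∑ i, pd i (fun w => F w i) v

/-- Collision kernel matrix A(v) = Λ|v|^{γ+2} Π(v), Π_{ij}(v) = δ_{ij} - vᵢvⱼ/|v|². -/
def Aker (Λ γ : ℝ) (v : V3) (i j : Fin 3) : ℝ :=
  Λ * nrm v ^ (γ + 2) * ((if i = j then (1 : ℝ) else 0) - v i * v j / nrm v ^ 2)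

/-- Fokker-Planck-Landau collision operator
`Q[f](v) = ∇_v · ∫ A(v-v*) (f(v*)∇_v f(v) - f(v)∇_{v*} f(v*)) dv*`. -/
def Qcol (Λ γ : ℝ) (f : V3 → ℝ) (v : V3) : ℝ :=
  div3 (fun w i =>
    ∫ w₁ : V3, ∑ j, Aker Λ γ (w - w₁) i j * (f w₁ * pd j f w - f w * pd j f w₁)) v

/-- G_{st}(γ,p,q) = ∫ |g|^γ g_s g_t H^p(g) H^q(g) M(g) dg. -/
def Gst (γ : ℝ) (s t : Fin 3) (p q : Fin 3 → ℕ) : ℝ :=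
  ∫ g : V3, nrm g ^ γ * g s * g t * Herm p g * Herm q g * Mxw g

/-- Generalized binomial coefficient C(x,k) = x(x-1)⋯(x-k+1)/k!. -/
def genBinom (x : ℝ) (k : ℕ) : ℝ := (∏ j ∈ Finset.range k, (x - j)) / k.factorial

/-- Scalar coefficient a_{pq}^{λκ}, zero unless p+q = λ+κ. -/
def aCoe (p q lam kap : ℕ) : ℝ :=
  if p + q = lam + kap then
    (2 : ℝ) ^ (-(((p : ℝ) + q) / 2)) * lam.factorial * kap.factorial *
      ∑ s ∈ Finset.Icc (p - kap) (min p lam),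
        (-1 : ℝ) ^ ((q : ℤ) - lam + s) /
          ((s.factorial * (lam - s).factorial * (p - s).factorial *
            ((q : ℤ) - lam + s).toNat.factorial : ℕ) : ℝ)
  else 0

/-- Multi-index coefficient a_{p,q}^{λ,κ} = ∏ᵢ a_{pᵢqᵢ}^{λᵢκᵢ}. -/
def aMulti (p q lam kap : Fin 3 → ℕ) : ℝ := ∏ i, aCoe (p i) (q i) (lam i) (kap i)

/-- B_p^q(γ,s,t) = -G_{st}(γ,p,q) + δ_{st} Σ_r G_{rr}(γ,p,q). -/
def Bcoe (γ : ℝ) (s t : Fin 3) (p q : Fin 3 → ℕ) : ℝ :=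
  -Gst γ s t p q + (if s = t then (1 : ℝ) else 0) * ∑ r, Gst γ r r p q

/-- The expansion coefficient A_α^{λ,κ} of the FPL collision operator. -/
def coeA (Λ γ : ℝ) (α lam kap : Fin 3 → ℕ) : ℝ :=
  (1 / (multiFact α : ℝ)) *
    ∫ v : V3, Herm α v *
      div3 (fun w i =>
        ∫ w₁ : V3, ∑ j, Aker Λ γ (w - w₁) i j *
          (Herm lam w₁ * Mxw w₁ * pd j (fun u => Herm kap u * Mxw u) w -
            Herm lam w * Mxw w * pd j (fun u => Herm kap u * Mxw u) w₁)) v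

/-- Multi-indices p with |p| < n, i.e. 0 ≤ |p| ≤ n-1. -/
def idxLt (n : ℕ) : Finset (Fin 3 → ℕ) :=
  (Fintype.piFinset (fun _ : Fin 3 => Finset.range n)).filter (fun p => degIdx p < n)

/-- Pairs of multi-indices (p,q) with p + q = σ. -/
def idxPairs (σ : Fin 3 → ℕ) : Finset ((Fin 3 → ℕ) × (Fin 3 → ℕ)) :=
  ((Fintype.piFinset fun i => Finset.range (σ i + 1)) ×ˢ
      (Fintype.piFinset fun i => Finset.range (σ i + 1))).filter fun x => x.1 + x.2 = σ

/-- Multi-index permutation operator exchanging the i-th and j-th entries. -/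
def swapIdx (i j : Fin 3) (p : Fin 3 → ℕ) : Fin 3 → ℕ := p ∘ Equiv.swap i j

/-- Associated Legendre function
`P_l^m(x) = ((-1)^m/(2^l l!)) (1-x²)^{m/2} d^{l+m}/dx^{l+m} (x²-1)^l`. -/
def assocLegendre (l : ℕ) (m : ℤ) (x : ℝ) : ℝ :=
  ((-1 : ℝ) ^ m * (1 - x ^ 2) ^ ((m : ℝ) / 2) / (2 ^ l * l.factorial)) *
    iteratedDeriv ((l : ℤ) + m).toNat (fun y => (y ^ 2 - 1) ^ l) x

/-- Spherical harmonic Y_l^m(n), written in terms of cos θ = n₃ and φ = arg(n₁ + i n₂). -/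
def sphHarm (l : ℕ) (m : ℤ) (n : V3) : ℂ :=
  ((Real.sqrt ((2 * l + 1) / (4 * π) * ((l : ℤ) - m).toNat.factorial /
      ((l : ℤ) + m).toNat.factorial) * assocLegendre l m (n 2) : ℝ) : ℂ) *
    Complex.exp (Complex.I * m * (Complex.arg ((n 0 : ℂ) + n 1 * Complex.I) : ℝ))

/-- Spherical harmonic with the convention Y_{l'}^{m'} = 0 when |m'| > l' or l' < 0. -/
def sphHarmZ (l m : ℤ) (n : V3) : ℂ :=
  if 0 ≤ l ∧ m.natAbs ≤ l.toNat then sphHarm l.toNat m n else 0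

/-- Surface integral over the unit sphere S² in spherical coordinates. -/
def sphereIntegral (F : V3 → ℂ) : ℂ :=
  ∫ θ in (0 : ℝ)..π, ∫ φ in (0 : ℝ)..(2 * π),
    F ![Real.sin θ * Real.cos φ, Real.sin θ * Real.sin φ, Real.cos θ] * (Real.sin θ : ℂ)

/-- Laguerre polynomial L_n^{(β)}(x) = (x^{-β} eˣ / n!) dⁿ/dxⁿ [x^{n+β} e^{-x}]. -/
def laguerre (n : ℕ) (β : ℝ) (x : ℝ) : ℝ :=
  (x ^ (-β) * Real.exp x / n.factorial) *
    iteratedDeriv n (fun y => y ^ ((n : ℝ) + β) * Real.exp (-y)) x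

/-- Normalized Burnett polynomial B_{α̂}(v) with α̂ = (l, m, nn). -/
def Burnett (l : ℕ) (m : ℤ) (nn : ℕ) (v : V3) : ℂ :=
  ((Real.sqrt ((2 : ℝ) ^ (1 - (l : ℝ)) * π ^ ((3 : ℝ) / 2) * nn.factorial /
        Real.Gamma (nn + l + 3 / 2)) *
      laguerre nn ((l : ℝ) + 1 / 2) (nrm v ^ 2 / 2) * nrm v ^ l : ℝ) : ℂ) *
    sphHarm l m (fun i => v i / nrm v)

/-- Connection coefficient C_{α̂}^α = ∫ B_{α̂}(v) H^α(v) M(v) dv. -/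
def coeC (l : ℕ) (m : ℤ) (nn : ℕ) (α : Fin 3 → ℕ) : ℂ :=
  ∫ v : V3, Burnett l m nn v * ((Herm α v * Mxw v : ℝ) : ℂ)

/-- Burnett indices α̂ = (α̂₁,α̂₂,α̂₃), α̂₂ ∈ {-α̂₁,…,α̂₁}, with |α̂|_B = α̂₁ + 2α̂₃ = N. -/
def burnettIdx (N : ℕ) : Finset (ℕ × ℤ × ℕ) :=
  ((Finset.range (N + 1)) ×ˢ (Finset.Icc (-(N : ℤ)) N) ×ˢ (Finset.range (N + 1))).filter
    fun x => x.1 + 2 * x.2.2 = N ∧ x.2.1.natAbs ≤ x.1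

/-- D_{n₁n₂}^{l₁l₂} = √(n₁!n₂!/(Γ(n₁+l₁+3/2)Γ(n₂+l₂+3/2))). -/
def Dcoe (n1 n2 l1 l2 : ℕ) : ℝ :=
  Real.sqrt ((n1.factorial * n2.factorial : ℝ) /
    (Real.Gamma (n1 + l1 + 3 / 2) * Real.Gamma (n2 + l2 + 3 / 2)))

/-- K(μ,α,κ,m,n) = (-1)^{m+n} Γ(μ+1) Σᵢ C(μ-α,m-i) C(μ-κ,n-i) C(i+μ,i). -/
def Kcoe (μ a k : ℝ) (m n : ℕ) : ℝ :=
  (-1 : ℝ) ^ (m + n) * Real.Gamma (μ + 1) *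
    ∑ i ∈ Finset.range (min m n + 1),
      genBinom (μ - a) (m - i) * genBinom (μ - k) (n - i) * genBinom ((i : ℝ) + μ) i

/-- F_{st}(l₁,m₁,l₂,m₂) = ∫_{S²} n_s n_t Y_{l₁}^{m₁}(n) Y_{l₂}^{m₂}(n) dn. -/
def Fst (s t : Fin 3) (l1 : ℕ) (m1 : ℤ) (l2 : ℕ) (m2 : ℤ) : ℂ :=
  sphereIntegral fun n => ((n s * n t : ℝ) : ℂ) * sphHarm l1 m1 n * sphHarm l2 m2 n

/-- Kronecker delta on ℤ. -/
def kdZ (a b : ℤ) : ℝ := if a = b then 1 else 0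

/-- η_{lm}^μ as in the paper (l, m, μ integers, μ ∈ {-1,0,1}). -/
def eta (l m μ : ℤ) : ℝ :=
  Real.sqrt ((((l : ℝ) + (2 * kdZ 1 μ - 1) * m + kdZ 1 μ) *
      ((l : ℝ) - (2 * kdZ (-1) μ - 1) * m + kdZ (-1) μ)) /
    ((2 : ℝ) ^ μ.natAbs * (2 * l - 1) * (2 * l + 1)))

/-- General Maxwellian M_{ρ,u,θ}. -/
def Mgen (ρ θ : ℝ) (u : V3) (v : V3) : ℝ :=
  ρ / (2 * π * θ) ^ ((3 : ℝ) / 2) * Real.exp (-(nrm (v - u) ^ 2) / (2 * θ))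

/-- Hermite coefficient f_α = (1/α!) ∫ H^α(v) f(v) dv. -/
def hermCoeff (f : V3 → ℝ) (α : Fin 3 → ℕ) : ℝ :=
  (1 / (multiFact α : ℝ)) * ∫ v : V3, Herm α v * f v

/-- τ(t) = 1 - 0.4 e^{-4t}. -/
def tau (t : ℝ) : ℝ := 1 - 0.4 * Real.exp (-4 * t)

/-- The BKW distribution. -/
def fBKW (t : ℝ) (v : V3) : ℝ :=
  (2 * π * tau t) ^ (-(3 : ℝ) / 2) * Real.exp (-(nrm v ^ 2) / (2 * tau t)) *
    (1 + (1 - tau t) / tau t * (nrm v ^ 2 / (2 * tau t) - 3 / 2))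

/-!
In spherical coordinates both `n₃ Y_l^m` and `n₁ Y_l^m` are short linear combinations of harmonics
of degrees `l ± 1`: for `n₃ = cos θ` this is the recurrence for `x P_l^m`, and for
`n₁ = sin θ (e^{iφ} + e^{-iφ}) / 2` it is given by the recurrences that raise or lower the
order `m`. Applying one recurrence to each factor reduces the integral to the pairing
`∫ Y_l^m Y_{l'}^{m'} = (-1)^{m'} δ_{l,l'} δ_{m,-m'}`. All recurrences come from the polynomials
`(x² - 1)^l / (2^l l!)` of Rodrigues' formula, and the pairing from integrating them by parts.

Working with a polynomial factor of `P_l^m` leaves the power `sin^m θ`, singular at the poles for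
`m < 0`; integrating over `φ` first removes it, since only `m + m' = 0` survives.
-/

section Polynomials

open Polynomial

/-- The polynomial `(X² - 1)^l / (2^l l!)` of Rodrigues' formula, whose `l`-th derivative is the
Legendre polynomial. It is zero for `l < 0`, which makes its recurrences hold for all integers. -/
def rodrigues : ℤ → ℝ[X]
  | Int.ofNat l => C ((2 : ℝ) ^ l * l.factorial)⁻¹ * (X ^ 2 - 1) ^ l
  | Int.negSucc _ => 0

lemma rodrigues_natCast (l : ℕ) :
    rodrigues l = C ((2 : ℝ) ^ l * l.factorial)⁻¹ * (X ^ 2 - 1) ^ l := rfl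

lemma rodrigues_of_neg {l : ℤ} (hl : l < 0) : rodrigues l = 0 := by
  obtain ⟨n, rfl⟩ := Int.eq_negSucc_of_lt_zero hl
  rfl

lemma rodrigues_zero : rodrigues 0 = 1 := by
  simpa using rodrigues_natCast 0

lemma rodrigues_coeff_succ (l : ℕ) : ((2 : ℝ) ^ l * l.factorial)⁻¹ =
    2 * (l + 1) * ((2 : ℝ) ^ (l + 1) * (l + 1).factorial)⁻¹ := by
  rw [Nat.factorial_succ]
  push_cast
  field_simp
  ring

lemma X_sq_sub_one_mul_rodrigues (l : ℤ) :
    (X ^ 2 - 1) * rodrigues l = (2 * (l + 1)) • rodrigues (l + 1) := by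
  obtain hl | rfl | hl : l < -1 ∨ l = -1 ∨ 0 ≤ l := by omega
  · rw [rodrigues_of_neg (by omega), rodrigues_of_neg (by omega), mul_zero, smul_zero]
  · simp [rodrigues_of_neg]
  · lift l to ℕ using hl
    rw [← Nat.cast_succ, rodrigues_natCast, rodrigues_natCast, rodrigues_coeff_succ, zsmul_eq_mul,
      Nat.succ_eq_add_one]
    simp only [C_mul, C_add, C_1, map_ofNat, map_natCast]
    push_cast
    ring

lemma derivative_rodrigues (l : ℤ) : derivative (rodrigues l) = X * rodrigues (l - 1) := by
  obtain hl | rfl | hl : l < 0 ∨ l = 0 ∨ 0 < l := by omega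
  · rw [rodrigues_of_neg hl, rodrigues_of_neg (by omega), derivative_zero, mul_zero]
  · simp [rodrigues_zero, rodrigues_of_neg]
  · obtain ⟨n, rfl⟩ : ∃ n : ℕ, l = (n + 1 : ℕ) := ⟨(l - 1).toNat, by omega⟩
    rw [Nat.cast_succ, add_sub_cancel_right, ← Nat.cast_succ, rodrigues_natCast,
      rodrigues_natCast, rodrigues_coeff_succ n, Nat.succ_eq_add_one, derivative_C_mul,
      derivative_pow]
    simp only [C_mul, C_add, C_1, map_ofNat, map_natCast, derivative_sub, derivative_X_pow,
      derivative_one, Nat.add_sub_cancel]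
    push_cast
    ring

lemma derivative_derivative_rodrigues (l : ℤ) :
    derivative (derivative (rodrigues (l + 1))) =
      (2 * l + 1) • rodrigues l + rodrigues (l - 1) := by
  have h := X_sq_sub_one_mul_rodrigues (l - 1)
  rw [sub_add_cancel, zsmul_eq_mul] at h
  rw [derivative_rodrigues, add_sub_cancel_right, derivative_mul, derivative_X,
    derivative_rodrigues, zsmul_eq_mul]
  push_cast at h ⊢
  linear_combination h

lemma two_mul_add_one_smul_iterate_derivative_rodrigues (l : ℤ) (k : ℕ) :
    (2 * l + 1) • derivative^[k] (rodrigues l) =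
      derivative^[k + 2] (rodrigues (l + 1)) - derivative^[k] (rodrigues (l - 1)) := by
  rw [Function.iterate_add_apply, Function.iterate_succ_apply, Function.iterate_one,
    derivative_derivative_rodrigues, iterate_map_add, iterate_derivative_smul,
    add_sub_cancel_right]

lemma X_mul_iterate_derivative_rodrigues (l : ℤ) (k : ℕ) :
    (2 * l + 1) • (X * derivative^[k] (rodrigues l)) =
      (2 * l - k + 1) • derivative^[k + 1] (rodrigues (l + 1)) +
        (k : ℤ) • derivative^[k - 1] (rodrigues (l - 1)) := by
  have hleibniz : derivative^[k + 1] (rodrigues (l + 1)) =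
      derivative^[k] (rodrigues l) * X + k • derivative^[k - 1] (rodrigues l) := by
    rw [Function.iterate_succ_apply, derivative_rodrigues, add_sub_cancel_right, mul_comm,
      iterate_derivative_mul_X]
  cases k with
  | zero => simp [derivative_rodrigues]
  | succ k =>
    have hrec := two_mul_add_one_smul_iterate_derivative_rodrigues l k
    simp only [zsmul_eq_mul, nsmul_eq_mul, Nat.add_sub_cancel] at *
    push_cast at *
    linear_combination -(2 * (l : ℝ[X]) + 1) * hleibniz - ((k : ℝ[X]) + 1) * hrec

lemma one_sub_X_sq_mul_iterate_derivative_rodrigues (l : ℤ) (k : ℕ) :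
    (2 * l + 1) • ((1 - X ^ 2) * derivative^[k] (rodrigues l)) =
      (k * (k - 1) : ℤ) • derivative^[k - 2] (rodrigues (l - 1)) -
        ((2 * l - k + 1) * (2 * l - k + 2)) • derivative^[k] (rodrigues (l + 1)) := by
  induction k with
  | zero =>
    have h := X_sq_sub_one_mul_rodrigues l
    simp only [zsmul_eq_mul, Function.iterate_zero, id] at *
    push_cast at *
    linear_combination -(2 * (l : ℝ[X]) + 1) * h
  | succ k ih =>
    have hX := X_mul_iterate_derivative_rodrigues l k
    -- The truncated exponents `k - 2 + 1` and `k - 1` differ only where `k * (k - 1)` vanishes.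
    have hlow : (k * (k - 1) : ℤ) • derivative^[k - 2 + 1] (rodrigues (l - 1)) =
        (k * (k - 1) : ℤ) • derivative^[k - 1] (rodrigues (l - 1)) := by
      rcases k with _ | _ | k
      · simp
      · simp
      · rfl
    have hderiv := congrArg derivative ih
    simp only [derivative_smul, derivative_sub, derivative_mul, derivative_one, derivative_X_pow,
      ← Function.iterate_succ_apply' derivative, Nat.succ_eq_add_one] at hderiv
    simp only [zsmul_eq_mul, map_natCast, Nat.add_one_sub_one, pow_one,
      show k + 1 - 2 = k - 1 by omega] at *
    push_cast at *
    linear_combination hderiv + 2 * hX + hlow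

end Polynomials

section AssociatedLegendre

open Polynomial

/-- The polynomial factor of the associated Legendre function: `P_l^m(x)` is
`(-1)^m (1 - x²)^(m/2)` times its value at `x`. For `l + m < 0` it is set to zero. -/
def legendreFactor (l m : ℤ) : ℝ[X] :=
  if 0 ≤ l + m then derivative^[(l + m).toNat] (rodrigues l) else 0

lemma legendreFactor_of_add_eq {l m : ℤ} {k : ℕ} (hk : l + m = k) :
    legendreFactor l m = derivative^[k] (rodrigues l) := by
  rw [legendreFactor, if_pos (by omega), hk, Int.toNat_natCast]

lemma natDegree_rodrigues_le (l : ℕ) : (rodrigues l).natDegree ≤ 2 * l := by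
  rw [rodrigues_natCast]
  compute_degree
  omega

lemma legendreFactor_eq_zero {l m : ℤ} (hm : ¬|m| ≤ l) : legendreFactor l m = 0 := by
  rw [abs_le, not_and_or] at hm
  obtain hneg | hnonneg := lt_or_ge (l + m) 0
  · rw [legendreFactor, if_neg hneg.not_ge]
  obtain ⟨k, hk⟩ := Int.eq_ofNat_of_zero_le hnonneg
  rw [legendreFactor_of_add_eq hk]
  obtain hl | hl := lt_or_ge l 0
  · rw [rodrigues_of_neg hl, iterate_derivative_zero]
  lift l to ℕ using hl
  exact iterate_derivative_eq_zero ((natDegree_rodrigues_le l).trans_lt (by omega))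

lemma two_mul_intCast_add_one_ne_zero (l : ℤ) : 2 * (l : ℝ) + 1 ≠ 0 := by
  exact_mod_cast (by omega : 2 * l + 1 ≠ 0)

lemma legendreFactor_eq_sub {l m : ℤ} (h : 0 ≤ l + m) :
    legendreFactor l m = (1 / (2 * l + 1) : ℝ) • legendreFactor (l + 1) (m + 1) -
      (1 / (2 * l + 1) : ℝ) • legendreFactor (l - 1) (m + 1) := by
  obtain ⟨k, hk⟩ := Int.eq_ofNat_of_zero_le h
  have hrec := two_mul_add_one_smul_iterate_derivative_rodrigues l k
  rw [← legendreFactor_of_add_eq hk,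
    ← legendreFactor_of_add_eq (l := l + 1) (m := m + 1) (by push_cast; omega),
    ← legendreFactor_of_add_eq (l := l - 1) (m := m + 1) (by omega),
    ← Int.cast_smul_eq_zsmul ℝ] at hrec
  push_cast at hrec
  rw [← smul_sub, one_div, ← hrec, inv_smul_smul₀ (two_mul_intCast_add_one_ne_zero l)]

lemma X_mul_legendreFactor {l m : ℤ} (h : 0 ≤ l + m) :
    X * legendreFactor l m = ((l - m + 1) / (2 * l + 1) : ℝ) • legendreFactor (l + 1) m +
      ((l + m) / (2 * l + 1) : ℝ) • legendreFactor (l - 1) m := by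
  obtain ⟨k, hk⟩ := Int.eq_ofNat_of_zero_le h
  have hlow : (k : ℤ) • derivative^[k - 1] (rodrigues (l - 1)) =
      ((l + m : ℤ) : ℝ) • legendreFactor (l - 1) m := by
    rw [hk, Int.cast_smul_eq_zsmul]
    cases k with
    | zero => simp
    | succ k => rw [legendreFactor_of_add_eq (k := k) (by omega), Nat.add_sub_cancel]
  have hrec := X_mul_iterate_derivative_rodrigues l k
  rw [hlow, ← legendreFactor_of_add_eq hk, ← hk,
    ← legendreFactor_of_add_eq (l := l + 1) (m := m) (by push_cast; omega),
    ← Int.cast_smul_eq_zsmul ℝ, ← Int.cast_smul_eq_zsmul ℝ] at hrec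
  push_cast at hrec
  rw [← inv_smul_smul₀ (two_mul_intCast_add_one_ne_zero l) (X * _), hrec]
  module

lemma one_sub_X_sq_mul_legendreFactor {l m : ℤ} (h : 0 ≤ l + m) :
    (1 - X ^ 2) * legendreFactor l m =
      ((l + m) * (l + m - 1) / (2 * l + 1) : ℝ) • legendreFactor (l - 1) (m - 1) -
        ((l - m + 1) * (l - m + 2) / (2 * l + 1) : ℝ) • legendreFactor (l + 1) (m - 1) := by
  obtain ⟨k, hk⟩ := Int.eq_ofNat_of_zero_le h
  have hlow : (k * (k - 1) : ℤ) • derivative^[k - 2] (rodrigues (l - 1)) =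
      (((l + m) * (l + m - 1) : ℤ) : ℝ) • legendreFactor (l - 1) (m - 1) := by
    rw [hk, Int.cast_smul_eq_zsmul]
    rcases k with _ | _ | k
    · simp
    · simp
    · rw [legendreFactor_of_add_eq (k := k) (by push_cast at hk; omega)]
      rfl
  have hrec := one_sub_X_sq_mul_iterate_derivative_rodrigues l k
  rw [hlow, ← legendreFactor_of_add_eq hk, ← hk,
    ← legendreFactor_of_add_eq (l := l + 1) (m := m - 1) (by omega),
    ← Int.cast_smul_eq_zsmul ℝ, ← Int.cast_smul_eq_zsmul ℝ] at hrec
  push_cast at hrec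
  rw [← inv_smul_smul₀ (two_mul_intCast_add_one_ne_zero l) ((1 - X ^ 2) * _), hrec]
  module

/-- The reciprocal of the squared `L²([-1, 1])` norm of `P_l^m`; only used for `|m| ≤ l`. -/
def legendreWeight (l m : ℤ) : ℝ :=
  (2 * l + 1) / 2 * (l - m).toNat.factorial / (l + m).toNat.factorial

lemma legendreWeight_eq {l m : ℤ} {a c : ℕ} (ha : l + m = a) (hc : l - m = c) :
    legendreWeight l m = (2 * l + 1) / 2 * c.factorial / a.factorial := by
  rw [legendreWeight, ha, hc, Int.toNat_natCast, Int.toNat_natCast]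

lemma legendreWeight_nonneg {l : ℤ} (hl : 0 ≤ l) (m : ℤ) : 0 ≤ legendreWeight l m := by
  have : (0 : ℝ) ≤ l := by exact_mod_cast hl
  unfold legendreWeight
  positivity

lemma exists_nat_add_sub_eq {l m : ℤ} (h : |m| ≤ l) : ∃ a c : ℕ, l + m = a ∧ l - m = c := by
  rw [abs_le] at h
  exact ⟨(l + m).toNat, (l - m).toNat, by omega, by omega⟩

lemma legendreWeight_add_one {l m : ℤ} (h : |m| ≤ l) :
    (l + m + 1) * (2 * l + 1) * legendreWeight (l + 1) m =
      (2 * l + 3) * (l - m + 1) * legendreWeight l m := by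
  obtain ⟨a, c, ha, hc⟩ := exists_nat_add_sub_eq h
  have ha' : (l + m : ℝ) = a := by exact_mod_cast ha
  have hc' : (l - m : ℝ) = c := by exact_mod_cast hc
  rw [legendreWeight_eq (a := a + 1) (c := c + 1) (by push_cast; omega) (by push_cast; omega),
    legendreWeight_eq ha hc, ha', hc', Nat.factorial_succ, Nat.factorial_succ]
  push_cast
  field_simp
  ring

lemma legendreWeight_add_one_add_one {l m : ℤ} (h : |m| ≤ l) :
    (l + m + 1) * (l + m + 2) * (2 * l + 1) * legendreWeight (l + 1) (m + 1) =
      (2 * l + 3) * legendreWeight l m := by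
  obtain ⟨a, c, ha, hc⟩ := exists_nat_add_sub_eq h
  have ha' : (l + m : ℝ) = a := by exact_mod_cast ha
  rw [legendreWeight_eq (a := a + 2) (c := c) (by push_cast; omega) (by omega),
    legendreWeight_eq ha hc, ha', Nat.factorial_succ, Nat.factorial_succ]
  push_cast
  field_simp
  ring

lemma legendreWeight_add_one_sub_one {l m : ℤ} (h : |m| ≤ l) :
    (2 * l + 1) * legendreWeight (l + 1) (m - 1) =
      (2 * l + 3) * (l - m + 1) * (l - m + 2) * legendreWeight l m := by
  obtain ⟨a, c, ha, hc⟩ := exists_nat_add_sub_eq h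
  have hc' : (l - m : ℝ) = c := by exact_mod_cast hc
  rw [legendreWeight_eq (a := a) (c := c + 2) (by omega) (by push_cast; omega),
    legendreWeight_eq ha hc, hc', Nat.factorial_succ, Nat.factorial_succ]
  push_cast
  field_simp
  ring

/-- The polynomial factor of the associated Legendre function normalized in `L²([-1, 1])`;
it vanishes unless `|m| ≤ l`. -/
def normLegendre (l m : ℤ) : ℝ[X] := √(legendreWeight l m) • legendreFactor l m

lemma normLegendre_eq_zero {l m : ℤ} (hm : ¬|m| ≤ l) : normLegendre l m = 0 := by
  rw [normLegendre, legendreFactor_eq_zero hm, smul_zero]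

lemma sqrt_legendreWeight_mul_smul_legendreFactor {l m l' m' j : ℤ} {p r : ℝ} (hl : 0 ≤ l)
    (hp : 0 ≤ p) (h : |m'| ≤ l' → p ^ 2 * ((2 * j - 1) * (2 * j + 1)) * legendreWeight l m =
      r * (2 * l + 1) ^ 2 * legendreWeight l' m') :
    (√(legendreWeight l m) * (p / (2 * l + 1))) • legendreFactor l' m' =
      √(r / ((2 * j - 1) * (2 * j + 1))) • normLegendre l' m' := by
  by_cases hm' : |m'| ≤ l'
  · have : (0 : ℝ) ≤ l := by exact_mod_cast hl
    have hj : (2 * j - 1 : ℝ) * (2 * j + 1) ≠ 0 := by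
      exact_mod_cast mul_ne_zero (by omega : 2 * j - 1 ≠ 0) (by omega : 2 * j + 1 ≠ 0)
    have hw : (p / (2 * l + 1)) ^ 2 * legendreWeight l m =
        r / ((2 * j - 1) * (2 * j + 1)) * legendreWeight l' m' := by
      rw [div_pow, div_mul_eq_mul_div, div_mul_eq_mul_div, div_eq_div_iff (by positivity) hj]
      linear_combination h hm'
    rw [normLegendre, smul_smul,
      ← Real.sqrt_mul' _ (legendreWeight_nonneg ((abs_nonneg m').trans hm') m'), ← hw,
      Real.sqrt_mul (sq_nonneg _), Real.sqrt_sq (by positivity), mul_comm]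
  · rw [normLegendre_eq_zero hm', legendreFactor_eq_zero hm', smul_zero, smul_zero]

lemma eta_zero (l m : ℤ) : eta l m 0 = √((l - m) * (l + m) / ((2 * l - 1) * (2 * l + 1))) := by
  rw [_root_.eta, kdZ, kdZ, if_neg (by decide), if_neg (by decide), Int.natAbs_zero, pow_zero]
  ring_nf

lemma sqrt_two_mul_eta_one (l m : ℤ) :
    √2 * eta l m 1 = √((l + m + 1) * (l + m) / ((2 * l - 1) * (2 * l + 1))) := by
  rw [_root_.eta, kdZ, kdZ, if_pos rfl, if_neg (by decide), Int.natAbs_one, pow_one,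
    ← Real.sqrt_mul zero_le_two, mul_assoc 2, ← mul_div_assoc, mul_div_mul_left _ _ two_ne_zero]
  ring_nf

lemma sqrt_two_mul_eta_neg_one (l m : ℤ) :
    √2 * eta l m (-1) = √((l - m) * (l - m + 1) / ((2 * l - 1) * (2 * l + 1))) := by
  rw [_root_.eta, kdZ, kdZ, if_neg (by decide), if_pos rfl, Int.natAbs_neg, Int.natAbs_one, pow_one,
    ← Real.sqrt_mul zero_le_two, mul_assoc 2, ← mul_div_assoc, mul_div_mul_left _ _ two_ne_zero]
  ring_nf

lemma X_mul_normLegendre {l m : ℤ} (h : |m| ≤ l) :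
    X * normLegendre l m = eta (l + 1) m 0 • normLegendre (l + 1) m +
      eta (-l) m 0 • normLegendre (l - 1) m := by
  obtain ⟨hm, hm'⟩ := abs_le.mp h
  have hm₁ : (0 : ℝ) ≤ l + m := by exact_mod_cast (by omega : 0 ≤ l + m)
  have hm₂ : (0 : ℝ) ≤ l - m := by exact_mod_cast (by omega : 0 ≤ l - m)
  rw [normLegendre, mul_smul_comm, X_mul_legendreFactor (by omega), smul_add, smul_smul, smul_smul,
    eta_zero, eta_zero]
  congr 1
  · refine sqrt_legendreWeight_mul_smul_legendreFactor (by omega) (by positivity) fun _ ↦ ?_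
    have hw := legendreWeight_add_one h
    push_cast
    linear_combination -(l - m + 1 : ℝ) * (2 * l + 1) * hw
  · refine sqrt_legendreWeight_mul_smul_legendreFactor (by omega) (by positivity) fun h' ↦ ?_
    have hw := legendreWeight_add_one h'
    rw [sub_add_cancel] at hw
    push_cast at *
    linear_combination (l + m : ℝ) * (2 * l + 1) * hw

lemma normLegendre_eq_sub {l m : ℤ} (h : |m| ≤ l) :
    normLegendre l m = (√2 * eta (l + 1) m 1) • normLegendre (l + 1) (m + 1) -
      (√2 * eta (-l) m 1) • normLegendre (l - 1) (m + 1) := by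
  obtain ⟨hm, hm'⟩ := abs_le.mp h
  rw [normLegendre, legendreFactor_eq_sub (by omega), smul_sub, smul_smul, smul_smul,
    sqrt_two_mul_eta_one, sqrt_two_mul_eta_one]
  congr 1
  · refine sqrt_legendreWeight_mul_smul_legendreFactor (by omega) zero_le_one fun _ ↦ ?_
    have hw := legendreWeight_add_one_add_one h
    push_cast
    linear_combination -(2 * l + 1 : ℝ) * hw
  · refine sqrt_legendreWeight_mul_smul_legendreFactor (by omega) zero_le_one fun h' ↦ ?_
    have hw := legendreWeight_add_one_sub_one h'
    rw [sub_add_cancel, add_sub_cancel_right] at hw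
    push_cast at *
    linear_combination (2 * l + 1 : ℝ) * hw

lemma one_sub_X_sq_mul_normLegendre {l m : ℤ} (h : |m| ≤ l) :
    (1 - X ^ 2) * normLegendre l m =
      (√2 * eta (-l) m (-1)) • normLegendre (l - 1) (m - 1) -
        (√2 * eta (l + 1) m (-1)) • normLegendre (l + 1) (m - 1) := by
  obtain ⟨hm, hm'⟩ := abs_le.mp h
  have hm₂ : (0 : ℝ) ≤ l - m := by exact_mod_cast (by omega : 0 ≤ l - m)
  have hm₃ : (0 : ℝ) ≤ (l + m) * (l + m - 1) := by
    have hsq := Int.le_self_sq (l + m)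
    exact_mod_cast (by linarith : 0 ≤ (l + m) * (l + m - 1))
  rw [normLegendre, mul_smul_comm, one_sub_X_sq_mul_legendreFactor (by omega), smul_sub, smul_smul,
    smul_smul, sqrt_two_mul_eta_neg_one, sqrt_two_mul_eta_neg_one]
  congr 1
  · refine sqrt_legendreWeight_mul_smul_legendreFactor (by omega) hm₃ fun h' ↦ ?_
    have hw := legendreWeight_add_one_add_one h'
    rw [sub_add_cancel, sub_add_cancel] at hw
    push_cast at *
    linear_combination (l + m : ℝ) * (l + m - 1) * (2 * l + 1) * hw
  · refine sqrt_legendreWeight_mul_smul_legendreFactor (by omega) (by positivity) fun _ ↦ ?_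
    have hw := legendreWeight_add_one_sub_one h
    push_cast
    linear_combination -(l - m + 1 : ℝ) * (l - m + 2) * (2 * l + 1) * hw

end AssociatedLegendre

section Orthogonality

open Polynomial

open scoped Nat

/-- Integration over `[-1, 1]` as a linear functional on polynomials. -/
def polyIntegral : ℝ[X] →ₗ[ℝ] ℝ where
  toFun p := ∫ x in (-1 : ℝ)..1, p.eval x
  map_add' p q := by
    simp only [eval_add]
    exact intervalIntegral.integral_add (p.continuous.intervalIntegrable _ _)
      (q.continuous.intervalIntegrable _ _)
  map_smul' c p := by simp

lemma polyIntegral_apply (p : ℝ[X]) : polyIntegral p = ∫ x in (-1 : ℝ)..1, p.eval x := rfl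

lemma polyIntegral_derivative (p : ℝ[X]) :
    polyIntegral (derivative p) = p.eval 1 - p.eval (-1) :=
  intervalIntegral.integral_eq_sub_of_hasDerivAt (fun x _ ↦ p.hasDerivAt x)
    (p.derivative.continuous.intervalIntegrable _ _)

lemma polyIntegral_derivative_mul {p : ℝ[X]} (hp : p.eval 1 = 0) (hp' : p.eval (-1) = 0)
    (q : ℝ[X]) : polyIntegral (derivative p * q) = -polyIntegral (p * derivative q) := by
  have h := polyIntegral_derivative (p * q)
  rw [derivative_mul, map_add, eval_mul, eval_mul, hp, hp'] at h
  linarith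

lemma eval_iterate_derivative_rodrigues {l n : ℕ} (hn : n < l) {t : ℝ} (ht : t ^ 2 = 1) :
    (derivative^[n] (rodrigues l)).eval t = 0 := by
  have hroot : X - C t ∣ X ^ 2 - 1 := dvd_iff_isRoot.mpr (by simp [IsRoot, ht])
  have hpow : (X - C t) ^ l ∣ rodrigues l :=
    (pow_dvd_pow_of_dvd hroot l).trans (dvd_mul_left _ _)
  exact dvd_iff_isRoot.mp ((dvd_pow_self _ (Nat.sub_ne_zero_of_lt hn)).trans
    (pow_sub_dvd_iterate_derivative_of_pow_dvd n hpow))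

lemma polyIntegral_iterate_derivative_rodrigues_mul {l i k : ℕ} (h : i + k ≤ l) (q : ℝ[X]) :
    polyIntegral (derivative^[i + k] (rodrigues l) * q) =
      (-1) ^ k * polyIntegral (derivative^[i] (rodrigues l) * derivative^[k] q) := by
  induction k generalizing q with
  | zero => simp
  | succ k ih =>
    rw [← add_assoc, Function.iterate_succ_apply',
      polyIntegral_derivative_mul (eval_iterate_derivative_rodrigues (by omega) (by norm_num))
        (eval_iterate_derivative_rodrigues (by omega) (by norm_num)),
      ih (by omega), Function.iterate_succ_apply, pow_succ]
    ring

lemma iterate_derivative_two_mul_rodrigues (l : ℕ) :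
    derivative^[2 * l] (rodrigues l) = C ((2 * l + 1)‼ / (2 * l + 1) : ℝ) := by
  induction l with
  | zero => simp [rodrigues_zero]
  | succ l ih =>
    have hlow : derivative^[2 * l] (rodrigues (l - 1)) = 0 := by
      cases l with
      | zero => simp [rodrigues_of_neg]
      | succ l =>
        rw [Nat.cast_succ, add_sub_cancel_right]
        exact iterate_derivative_eq_zero ((natDegree_rodrigues_le l).trans_lt (by omega))
    have hrec := two_mul_add_one_smul_iterate_derivative_rodrigues l (2 * l)
    rw [hlow, sub_zero, ih, zsmul_eq_mul] at hrec
    rw [Nat.cast_succ, mul_add, mul_one, ← hrec, Nat.doubleFactorial_add_two, ← C_eq_intCast,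
      ← C_mul]
    congr 1
    push_cast
    field_simp
    ring

lemma polyIntegral_rodrigues (l : ℕ) :
    polyIntegral (rodrigues l) = (-1) ^ l * 2 / (2 * l + 1)‼ := by
  induction l with
  | zero => norm_num [rodrigues_zero, polyIntegral_apply]
  | succ l ih =>
    have h := polyIntegral_derivative (derivative (rodrigues (l + 2 : ℕ)))
    have hend (t : ℝ) (ht : t ^ 2 = 1) : (derivative (rodrigues (l + 2 : ℕ))).eval t = 0 :=
      eval_iterate_derivative_rodrigues (n := 1) (by omega) ht
    rw [hend 1 (by norm_num), hend (-1) (by norm_num), Nat.cast_add_one,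
      derivative_derivative_rodrigues, map_add, map_zsmul, Nat.cast_add_one, add_sub_cancel_right,
      ih, zsmul_eq_mul] at h
    rw [mul_add, mul_one, add_right_comm, Nat.doubleFactorial_add_two, eq_div_iff (by positivity)]
    push_cast at h ⊢
    field_simp at h
    linear_combination h

lemma polyIntegral_legendre_mul_legendre (l l' : ℕ) :
    polyIntegral (derivative^[l] (rodrigues l) * derivative^[l'] (rodrigues l')) =
      if l = l' then (2 / (2 * l + 1) : ℝ) else 0 := by
  wlog h : l' ≤ l generalizing l l'
  · rw [mul_comm, this l' l (by omega), if_neg (by omega), if_neg (by omega)]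
  have hparts := polyIntegral_iterate_derivative_rodrigues_mul (l := l) (i := 0) (k := l) (by omega)
    (derivative^[l'] (rodrigues l'))
  rw [zero_add, ← Function.iterate_add_apply] at hparts
  rw [hparts]
  split_ifs with heq
  · subst heq
    rw [← two_mul, iterate_derivative_two_mul_rodrigues, Function.iterate_zero_apply,
      mul_comm _ (C _), ← smul_eq_C_mul, map_smul, polyIntegral_rodrigues]
    have hfac : ((2 * l + 1)‼ : ℝ) ≠ 0 := by exact_mod_cast (Nat.doubleFactorial_pos _).ne'
    rw [smul_eq_mul]
    field_simp
    rw [← pow_mul, mul_comm l, pow_mul, neg_one_sq, one_pow]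
  · rw [iterate_derivative_eq_zero ((natDegree_rodrigues_le l').trans_lt (by omega)), mul_zero,
      map_zero, mul_zero]

lemma polyIntegral_iterate_derivative_mul_iterate_derivative (l : ℕ) {l' k : ℕ} (hk : k ≤ l') :
    polyIntegral (derivative^[l + k] (rodrigues l) * derivative^[l' - k] (rodrigues l')) =
      if l = l' then ((-1) ^ k * (2 / (2 * l + 1)) : ℝ) else 0 := by
  have hparts := polyIntegral_iterate_derivative_rodrigues_mul (l := l') (i := l' - k) (k := k)
    (by omega) (derivative^[l] (rodrigues l))
  rw [Nat.sub_add_cancel hk, ← Function.iterate_add_apply, mul_comm (derivative^[l'] _),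
    polyIntegral_legendre_mul_legendre] at hparts
  rw [← mul_ite_zero, hparts, ← mul_assoc, ← mul_pow, neg_one_mul, neg_neg, one_pow, one_mul,
    add_comm l k, mul_comm]

lemma polyIntegral_legendreFactor_mul {l l' m : ℤ} (hm : |m| ≤ l) (hm' : |m| ≤ l') :
    polyIntegral (legendreFactor l m * legendreFactor l' (-m)) =
      if l = l' then (-1) ^ m * (2 / (2 * l + 1) : ℝ) else 0 := by
  lift l to ℕ using (abs_nonneg m).trans hm
  lift l' to ℕ using (abs_nonneg m).trans hm'
  obtain ⟨k, rfl | rfl⟩ := m.eq_nat_or_neg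
  · rw [Nat.abs_cast] at hm hm'
    rw [legendreFactor_of_add_eq (k := l + k) (by omega),
      legendreFactor_of_add_eq (k := l' - k) (by omega),
      polyIntegral_iterate_derivative_mul_iterate_derivative l (by omega)]
    simp
  · rw [abs_neg, Nat.abs_cast] at hm hm'
    rw [legendreFactor_of_add_eq (k := l - k) (by omega),
      legendreFactor_of_add_eq (k := l' + k) (by omega), mul_comm,
      polyIntegral_iterate_derivative_mul_iterate_derivative l' (by omega)]
    obtain rfl | hne := eq_or_ne l l'
    · rw [if_pos rfl, if_pos rfl, zpow_neg, ← inv_zpow, inv_neg_one, zpow_natCast, Int.cast_natCast]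
    · rw [if_neg hne.symm, if_neg (by exact_mod_cast hne)]

lemma sqrt_legendreWeight_mul_sqrt_legendreWeight_neg {l m : ℤ} (h : |m| ≤ l) :
    √(legendreWeight l m) * √(legendreWeight l (-m)) = (2 * l + 1) / 2 := by
  have hl : (0 : ℝ) ≤ l := by exact_mod_cast (abs_nonneg m).trans h
  have hprod : legendreWeight l m * legendreWeight l (-m) = ((2 * l + 1) / 2) ^ 2 := by
    rw [legendreWeight, legendreWeight, sub_neg_eq_add, ← sub_eq_add_neg]
    field_simp
  rw [← Real.sqrt_mul (legendreWeight_nonneg ((abs_nonneg m).trans h) m), hprod,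
    Real.sqrt_sq (by positivity)]

theorem polyIntegral_normLegendre_mul (l l' : ℤ) {m : ℤ} (hm : |m| ≤ l) :
    polyIntegral (normLegendre l m * normLegendre l' (-m)) = if l = l' then (-1) ^ m else 0 := by
  by_cases hm' : |m| ≤ l'
  · rw [normLegendre, normLegendre, smul_mul_smul_comm, map_smul,
      polyIntegral_legendreFactor_mul hm hm', smul_eq_mul]
    split_ifs with h
    · subst h
      rw [sqrt_legendreWeight_mul_sqrt_legendreWeight_neg hm]
      have := two_mul_intCast_add_one_ne_zero l
      field_simp
    · rw [mul_zero]
  · rw [normLegendre_eq_zero (m := -m) (by rwa [abs_neg]), mul_zero, map_zero,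
      if_neg (by rintro rfl; exact hm' hm)]

end Orthogonality

section SphericalCoordinates

open Polynomial

/-- The point of the unit sphere with polar angle `θ` and azimuthal angle `φ`. -/
def spherePoint (θ φ : ℝ) : V3 := ![sin θ * cos φ, sin θ * sin φ, cos θ]

lemma iteratedDeriv_eval (p : ℝ[X]) (k : ℕ) :
    iteratedDeriv k (fun x ↦ p.eval x) = fun x ↦ (derivative^[k] p).eval x := by
  induction k with
  | zero => simp
  | succ k ih =>
    ext x
    rw [iteratedDeriv_succ, ih, Polynomial.deriv, Function.iterate_succ_apply']

lemma assocLegendre_eq {l : ℕ} {m : ℤ} (hm : 0 ≤ l + m) (x : ℝ) :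
    assocLegendre l m x = (-1) ^ m * (1 - x ^ 2) ^ ((m : ℝ) / 2) * (legendreFactor l m).eval x := by
  have hderiv := congrFun (iteratedDeriv_eval ((X ^ 2 - 1) ^ l) (l + m).toNat) x
  simp only [eval_pow, eval_sub, eval_X, eval_one] at hderiv
  rw [assocLegendre, hderiv, legendreFactor, if_pos hm, rodrigues_natCast, iterate_derivative_C_mul,
    eval_mul, eval_C]
  ring

lemma sphHarmZ_natCast {l : ℕ} {m : ℤ} (hm : |m| ≤ l) : sphHarmZ l m = sphHarm l m := by
  ext n
  rw [sphHarmZ, if_pos (by rw [abs_le] at hm; omega), Int.toNat_natCast]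

lemma sqrt_sphHarm_normalization (l : ℕ) (m : ℤ) :
    √((2 * l + 1) / (4 * π) * ((l : ℤ) - m).toNat.factorial / ((l : ℤ) + m).toNat.factorial) =
      √(legendreWeight l m) / √(2 * π) := by
  rw [← Real.sqrt_div (legendreWeight_nonneg (Int.natCast_nonneg l) m), legendreWeight]
  congr 1
  push_cast
  field_simp
  ring

lemma exp_I_mul_intCast_mul_arg {r : ℝ} (hr : 0 < r) (m : ℤ) (φ : ℝ) :
    Complex.exp (Complex.I * m * (Complex.arg
      (((r * cos φ : ℝ) : ℂ) + ((r * sin φ : ℝ) : ℂ) * Complex.I) : ℝ)) =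
      Complex.exp (Complex.I * m * φ) := by
  have hpolar : ((r * cos φ : ℝ) : ℂ) + ((r * sin φ : ℝ) : ℂ) * Complex.I =
      r * (Complex.cos φ + Complex.sin φ * Complex.I) := by
    push_cast
    ring
  have harg := congrArg Complex.ofReal (Complex.arg_mul_cos_add_sin_mul_I_sub hr φ)
  push_cast at harg
  rw [hpolar]
  refine Complex.exp_eq_exp_iff_exists_int.mpr ⟨m * ⌊(π - φ) / (2 * π)⌋, ?_⟩
  push_cast
  linear_combination Complex.I * m * harg

lemma sphHarmZ_spherePoint {θ : ℝ} (hθ : θ ∈ Set.Ioo 0 π) (l m : ℤ) (φ : ℝ) :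
    sphHarmZ l m (spherePoint θ φ) =
      ((-1) ^ m * sin θ ^ m * (normLegendre l m).eval (cos θ) / √(2 * π) : ℝ) *
        Complex.exp (Complex.I * m * φ) := by
  have hs : 0 < sin θ := Real.sin_pos_of_mem_Ioo hθ
  by_cases hm : |m| ≤ l
  · lift l to ℕ using (abs_nonneg m).trans hm
    have hpow : (1 - cos θ ^ 2) ^ ((m : ℝ) / 2) = sin θ ^ m := by
      rw [← Real.sin_sq, ← Real.rpow_natCast, ← Real.rpow_mul hs.le, ← Real.rpow_intCast]
      congr 1
      push_cast
      ring
    rw [sphHarmZ_natCast hm, sphHarm, sqrt_sphHarm_normalization,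
      assocLegendre_eq (by rw [abs_le] at hm; omega), normLegendre, eval_smul, smul_eq_mul]
    simp only [spherePoint, Matrix.cons_val]
    rw [exp_I_mul_intCast_mul_arg hs, hpow]
    congr 2
    ring
  · rw [normLegendre_eq_zero hm, sphHarmZ, if_neg (by rw [Int.abs_eq_natAbs] at hm; omega)]
    simp

lemma integral_exp_I_mul_intCast_mul (n : ℤ) :
    ∫ φ in (0 : ℝ)..2 * π, Complex.exp (Complex.I * n * φ) = if n = 0 then 2 * (π : ℂ) else 0 := by
  split_ifs with h
  · simp [h]
  · have hperiod : Complex.exp (Complex.I * n * (2 * π : ℝ)) = 1 :=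
      Complex.exp_eq_one_iff.mpr ⟨n, by push_cast; ring⟩
    rw [integral_exp_mul_complex (mul_ne_zero Complex.I_ne_zero (by exact_mod_cast h)), hperiod]
    simp

/-- Integrability in spherical coordinates: the iterated integral defining `sphereIntegral F` only
involves integrable functions, except possibly at the poles. -/
structure SphereIntegrable (F : V3 → ℂ) : Prop where
  azimuthal : ∀ θ ∈ Set.Ioo 0 π, IntervalIntegrable
    (fun φ ↦ F (spherePoint θ φ) * (sin θ : ℂ)) volume 0 (2 * π)
  polar : IntervalIntegrable
    (fun θ ↦ ∫ φ in (0 : ℝ)..2 * π, F (spherePoint θ φ) * (sin θ : ℂ)) volume 0 π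

lemma sphereIntegral_congr {F G : V3 → ℂ}
    (h : ∀ θ ∈ Set.Ioo 0 π, ∀ φ, F (spherePoint θ φ) = G (spherePoint θ φ)) :
    sphereIntegral F = sphereIntegral G :=
  intervalIntegral.integral_congr_Ioo_of_le pi_pos.le fun θ hθ ↦
    intervalIntegral.integral_congr fun φ _ ↦ congrArg (· * (sin θ : ℂ)) (h θ hθ φ)

lemma sphereIntegral_sum {ι : Type*} (s : Finset ι) (c : ι → ℂ) {F : ι → V3 → ℂ}
    (hF : ∀ i ∈ s, SphereIntegrable (F i)) :
    sphereIntegral (fun n ↦ ∑ i ∈ s, c i * F i n) = ∑ i ∈ s, c i * sphereIntegral (F i) := by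
  calc
    _ = ∫ θ in (0 : ℝ)..π, ∑ i ∈ s,
        c i * ∫ φ in (0 : ℝ)..2 * π, F i (spherePoint θ φ) * (sin θ : ℂ) := by
      refine intervalIntegral.integral_congr_Ioo_of_le pi_pos.le fun θ hθ ↦ ?_
      simp only [Finset.sum_mul, mul_assoc, ← intervalIntegral.integral_const_mul]
      exact intervalIntegral.integral_finsetSum fun i hi ↦
        ((hF i hi).azimuthal θ hθ).const_mul (c i)
    _ = _ := by
      rw [intervalIntegral.integral_finsetSum fun i hi ↦ (hF i hi).polar.const_mul (c i)]
      simp only [intervalIntegral.integral_const_mul]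
      rfl

lemma sphHarmZ_mul_sphHarmZ_spherePoint {θ : ℝ} (hθ : θ ∈ Set.Ioo 0 π) (l m l' m' : ℤ) (φ : ℝ) :
    sphHarmZ l m (spherePoint θ φ) * sphHarmZ l' m' (spherePoint θ φ) * (sin θ : ℂ) =
      ((-1) ^ (m + m') * sin θ ^ (m + m' + 1) *
        (normLegendre l m * normLegendre l' m').eval (cos θ) / (2 * π) : ℝ) *
          Complex.exp (Complex.I * (m + m' : ℤ) * φ) := by
  have hs : sin θ ≠ 0 := (sin_pos_of_mem_Ioo hθ).ne'
  have hexp : Complex.exp (Complex.I * (m + m' : ℤ) * φ) =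
      Complex.exp (Complex.I * m * φ) * Complex.exp (Complex.I * m' * φ) := by
    rw [← Complex.exp_add]
    push_cast
    ring_nf
  have hsqrt : (√(2 * π) : ℂ) ^ 2 = 2 * π := by
    exact_mod_cast congrArg Complex.ofReal (Real.sq_sqrt two_pi_pos.le)
  rw [sphHarmZ_spherePoint hθ, sphHarmZ_spherePoint hθ, hexp,
    zpow_add₀ (by norm_num : (-1 : ℝ) ≠ 0), zpow_add_one₀ hs, zpow_add₀ hs, eval_mul]
  push_cast
  rw [← hsqrt]
  ring

lemma integral_sphHarmZ_mul_sphHarmZ {θ : ℝ} (hθ : θ ∈ Set.Ioo 0 π) (l m l' m' : ℤ) :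
    ∫ φ in (0 : ℝ)..2 * π,
      sphHarmZ l m (spherePoint θ φ) * sphHarmZ l' m' (spherePoint θ φ) * (sin θ : ℂ) =
      ((if m = -m' then (normLegendre l m * normLegendre l' m').eval (cos θ) * sin θ else 0 : ℝ) :
        ℂ) := by
  simp only [sphHarmZ_mul_sphHarmZ_spherePoint hθ]
  rw [intervalIntegral.integral_const_mul, integral_exp_I_mul_intCast_mul]
  split_ifs with hsum hm hm
  · rw [hsum]
    push_cast
    field_simp
  · omega
  · omega
  · simp

lemma sphereIntegrable_sphHarmZ_mul (l m l' m' : ℤ) :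
    SphereIntegrable (fun n ↦ sphHarmZ l m n * sphHarmZ l' m' n) where
  azimuthal θ hθ := by
    simp only [sphHarmZ_mul_sphHarmZ_spherePoint hθ]
    exact Continuous.intervalIntegrable (by fun_prop) _ _
  polar := by
    have hcont : Continuous fun θ ↦
        ((if m = -m' then (normLegendre l m * normLegendre l' m').eval (cos θ) * sin θ else 0 : ℝ) :
          ℂ) := by
      split_ifs <;> fun_prop
    refine (hcont.intervalIntegrable 0 π).congr_uIoo fun θ hθ ↦ ?_
    rw [Set.uIoo_of_le pi_pos.le] at hθ
    exact (integral_sphHarmZ_mul_sphHarmZ hθ l m l' m').symm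

lemma integral_eval_cos_mul_sin (p : ℝ[X]) :
    ∫ θ in (0 : ℝ)..π, p.eval (cos θ) * sin θ = polyIntegral p := by
  have hsubst := intervalIntegral.integral_comp_mul_deriv (a := 0) (b := π) (f' := fun θ ↦ -sin θ)
    (g := fun x ↦ p.eval x) (fun θ _ ↦ hasDerivAt_cos θ) (by fun_prop) p.continuous
  simp only [Function.comp, mul_neg, intervalIntegral.integral_neg, cos_zero, cos_pi] at hsubst
  rw [intervalIntegral.integral_symm (-1) 1] at hsubst
  rw [polyIntegral_apply]
  exact neg_injective hsubst

theorem sphereIntegral_sphHarmZ_mul (l m l' m' : ℤ) :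
    sphereIntegral (fun n ↦ sphHarmZ l m n * sphHarmZ l' m' n) =
      if l = l' ∧ m = -m' ∧ |m'| ≤ l' then (-1) ^ m' else 0 := by
  have hpolar : sphereIntegral (fun n ↦ sphHarmZ l m n * sphHarmZ l' m' n) =
      ((if m = -m' then polyIntegral (normLegendre l m * normLegendre l' m') else 0 : ℝ) : ℂ) := by
    have hcongr := intervalIntegral.integral_congr_Ioo_of_le (μ := volume) pi_pos.le fun θ hθ ↦
      integral_sphHarmZ_mul_sphHarmZ hθ l m l' m'
    refine hcongr.trans ?_
    rw [intervalIntegral.integral_ofReal]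
    split_ifs
    · rw [integral_eval_cos_mul_sin]
    · simp
  rw [hpolar]
  by_cases hm : m = -m'
  · by_cases hm' : |m'| ≤ l'
    · subst hm
      rw [if_pos rfl, mul_comm, polyIntegral_normLegendre_mul l' l hm']
      simp only [hm', and_true, eq_comm (a := l')]
      split_ifs <;> simp
    · simp [normLegendre_eq_zero hm', hm']
  · simp [hm]

lemma cos_mul_sphHarmZ {θ : ℝ} (hθ : θ ∈ Set.Ioo 0 π) {l m : ℤ} (hm : |m| ≤ l) (φ : ℝ) :
    (cos θ : ℂ) * sphHarmZ l m (spherePoint θ φ) =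
      ∑ k ∈ Finset.range 2, (eta ((if k = 0 then 1 else 0) + (-1) ^ k * l) m 0 : ℂ) *
        sphHarmZ (l + (-1) ^ k) m (spherePoint θ φ) := by
  have hrec := congrArg (fun p : ℝ[X] ↦ ((p.eval (cos θ) : ℝ) : ℂ)) (X_mul_normLegendre hm)
  simp only [eval_mul, eval_X, eval_add, eval_smul, smul_eq_mul, Complex.ofReal_mul,
    Complex.ofReal_add] at hrec
  simp only [sphHarmZ_spherePoint hθ, Finset.sum_range_succ, Finset.sum_range_zero, if_pos,
    one_ne_zero, if_false, pow_zero, pow_one, one_mul, neg_one_mul, zero_add, add_comm 1 l,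
    ← sub_eq_add_neg, zero_sub]
  push_cast at hrec ⊢
  linear_combination ((-1) ^ m * Complex.sin θ ^ m / √(2 * π) *
    Complex.exp (Complex.I * m * φ)) * hrec

lemma cos_mul_exp_I_mul_intCast_mul (m : ℤ) (φ : ℝ) :
    (cos φ : ℂ) * Complex.exp (Complex.I * m * φ) =
      (Complex.exp (Complex.I * (m + 1 : ℤ) * φ) +
        Complex.exp (Complex.I * (m - 1 : ℤ) * φ)) / 2 := by
  rw [Complex.ofReal_cos, Complex.cos, div_mul_eq_mul_div, add_mul, ← Complex.exp_add,
    ← Complex.exp_add]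
  push_cast
  ring_nf

lemma sin_mul_cos_mul_sphHarmZ {θ : ℝ} (hθ : θ ∈ Set.Ioo 0 π) {l m : ℤ} (hm : |m| ≤ l) (φ : ℝ) :
    (sin θ * cos φ : ℂ) * sphHarmZ l m (spherePoint θ φ) =
      ∑ j ∈ Finset.range 2, ∑ ν ∈ Finset.range 2,
        (((-1) ^ (ν + j + 1) / √2 *
          eta ((-1) ^ j * l + (if j = 0 then 1 else 0)) m ((-1) ^ ν) : ℝ) : ℂ) *
        sphHarmZ (l + (-1) ^ j) (m + (-1) ^ ν) (spherePoint θ φ) := by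
  have hs : (sin θ : ℂ) ≠ 0 := Complex.ofReal_ne_zero.mpr (sin_pos_of_mem_Ioo hθ).ne'
  have hsin : (sin θ : ℂ) ^ 2 = 1 - (cos θ : ℂ) ^ 2 := by exact_mod_cast sin_sq θ
  have hraise := congrArg (fun p : ℝ[X] ↦ ((p.eval (cos θ) : ℝ) : ℂ)) (normLegendre_eq_sub hm)
  have hlower := congrArg (fun p : ℝ[X] ↦ ((p.eval (cos θ) : ℝ) : ℂ))
    (one_sub_X_sq_mul_normLegendre hm)
  simp only [eval_mul, eval_X, eval_sub, eval_one, eval_pow, eval_smul, smul_eq_mul,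
    Complex.ofReal_mul, Complex.ofReal_sub, Complex.ofReal_one, Complex.ofReal_pow] at hraise hlower
  rw [← hsin, pow_two, mul_assoc, ← eq_inv_mul_iff_mul_eq₀ hs] at hlower
  have hsqrt : (√2 : ℂ)⁻¹ = √2 / 2 := by
    exact_mod_cast congrArg Complex.ofReal (sqrt_div_self (x := 2)).symm
  simp only [sphHarmZ_spherePoint hθ, Finset.sum_range_succ, Finset.sum_range_zero, if_pos,
    one_ne_zero, if_false, pow_zero, pow_one, one_mul, neg_one_mul, zero_add, add_zero,
    ← sub_eq_add_neg]
  simp only [Complex.ofReal_mul, Complex.ofReal_div, Complex.ofReal_zpow, Complex.ofReal_pow,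
    Complex.ofReal_neg, Complex.ofReal_one, zpow_add_one₀ hs, zpow_sub_one₀ hs,
    zpow_add_one₀ (neg_ne_zero.mpr one_ne_zero : (-1 : ℂ) ≠ 0),
    zpow_sub_one₀ (neg_ne_zero.mpr one_ne_zero : (-1 : ℂ) ≠ 0), div_eq_mul_inv _ (√2 : ℂ), hsqrt]
  linear_combination
    (sin θ * ((-1) ^ m * (sin θ : ℂ) ^ m * ((normLegendre l m).eval (cos θ) : ℝ)) / √(2 * π)) *
      cos_mul_exp_I_mul_intCast_mul m φ +
    ((-1) ^ m * (sin θ : ℂ) ^ m * sin θ / (2 * √(2 * π)) *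
      Complex.exp (Complex.I * (m + 1 : ℤ) * φ)) * hraise +
    ((-1) ^ m * (sin θ : ℂ) ^ m / (2 * √(2 * π)) *
      Complex.exp (Complex.I * (m - 1 : ℤ) * φ)) * hlower

theorem sphereIntegral_mul_sphHarmZ_mul_sphHarmZ {l m l' m' : ℤ} (hm : |m| ≤ l) (hm' : |m'| ≤ l') :
    sphereIntegral (fun n ↦ ((n 0 * n 2 : ℝ) : ℂ) * sphHarmZ l m n * sphHarmZ l' m' n) =
      ∑ k ∈ Finset.range 2, ∑ j ∈ Finset.range 2, ∑ ν ∈ Finset.range 2,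
        (eta ((if k = 0 then 1 else 0) + (-1) ^ k * l') m' 0 *
          ((-1) ^ (ν + j + 1) / √2 *
            eta ((-1) ^ j * l + (if j = 0 then 1 else 0)) m ((-1) ^ ν)) : ℝ) *
        sphereIntegral (fun n ↦
          sphHarmZ (l + (-1) ^ j) (m + (-1) ^ ν) n * sphHarmZ (l' + (-1) ^ k) m' n) := by
  have hsum := sphereIntegral_sum (Finset.range 2 ×ˢ Finset.range 2 ×ˢ Finset.range 2)
    (fun i ↦ ((eta ((if i.1 = 0 then 1 else 0) + (-1) ^ i.1 * l') m' 0 *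
      ((-1) ^ (i.2.2 + i.2.1 + 1) / √2 *
        eta ((-1) ^ i.2.1 * l + (if i.2.1 = 0 then 1 else 0)) m ((-1) ^ i.2.2)) : ℝ) : ℂ))
    (fun i _ ↦ sphereIntegrable_sphHarmZ_mul (l + (-1) ^ i.2.1) (m + (-1) ^ i.2.2)
      (l' + (-1) ^ i.1) m')
  simp only [Finset.sum_product] at hsum
  refine .trans (sphereIntegral_congr fun θ hθ φ ↦ ?_) hsum
  calc
    _ = (cos θ : ℂ) * sphHarmZ l' m' (spherePoint θ φ) *
        ((sin θ * cos φ : ℂ) * sphHarmZ l m (spherePoint θ φ)) := by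
      simp only [spherePoint, Matrix.cons_val, Complex.ofReal_mul]
      ring
    _ = _ := by
      rw [cos_mul_sphHarmZ hθ hm', sin_mul_cos_mul_sphHarmZ hθ hm, Finset.sum_mul]
      refine Finset.sum_congr rfl fun k _ ↦ ?_
      simp only [Finset.mul_sum]
      refine Finset.sum_congr rfl fun j _ ↦ Finset.sum_congr rfl fun ν _ ↦ ?_
      push_cast
      ring

lemma eta_mul_sphereIntegral_sphHarmZ_mul {k : ℕ} (hk : k ∈ Finset.range 2) {l' m' : ℤ}
    (hm' : |m'| ≤ l') (l m : ℤ) :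
    (eta ((if k = 0 then 1 else 0) + (-1) ^ k * l') m' 0 : ℂ) *
        sphereIntegral (fun n ↦ sphHarmZ l m n * sphHarmZ (l' + (-1) ^ k) m' n) =
      eta ((if k = 0 then 1 else 0) + (-1) ^ k * l') m' 0 *
        (if l = l' + (-1) ^ k ∧ m = -m' then (-1) ^ m' else 0) := by
  rw [sphereIntegral_sphHarmZ_mul]
  by_cases hrange : |m'| ≤ l' + (-1) ^ k
  · simp only [hrange, and_true]
  · -- The harmonic of degree `l' - 1 < |m'|` vanishes, but so does its coefficient.
    have hk_one : k = 1 := by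
      rw [Finset.mem_range] at hk
      interval_cases k
      · omega
      · rfl
    subst hk_one
    have hl : |m'| = l' := by omega
    have hprod : (-|(m' : ℝ)| - m') * (-|(m' : ℝ)| + m') = 0 := by
      linear_combination sq_abs (m' : ℝ)
    have hzero : eta (-l') m' 0 = 0 := by
      rw [eta_zero, ← hl, Int.cast_neg, Int.cast_abs, hprod, zero_div, sqrt_zero]
    simp [hzero]

end SphericalCoordinates

/-- explicit formula for F₁₃(l₁,m₁,l₂,m₂) = ∫_{S²} n₁n₃ Y_{l₁}^{m₁} Y_{l₂}^{m₂} dn. -/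
theorem F13_explicit (l1 l2 : ℕ) (m1 m2 : ℤ) (h1 : m1.natAbs ≤ l1) (h2 : m2.natAbs ≤ l2) :
    sphereIntegral (fun n => ((n 0 * n 2 : ℝ) : ℂ) * sphHarm l1 m1 n * sphHarm l2 m2 n) =
      (((-1 : ℝ) ^ (m2 + 1) / Real.sqrt 2 *
        ∑ k ∈ Finset.range 2, ∑ j ∈ Finset.range 2, ∑ l ∈ Finset.range 2,
          (-1 : ℝ) ^ (l + j) *
            eta ((if k = 0 then 1 else 0) + (-1) ^ k * l2) m2 0 *
            eta ((-1) ^ j * l1 + (if j = 0 then 1 else 0)) m1 ((-1) ^ l) *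
            (if (l1 : ℤ) + (if k = 1 then 1 else 0) - (if j = 1 then 1 else 0) =
                (l2 : ℤ) - (if k = 1 then 1 else 0) + (if j = 1 then 1 else 0)
              then (1 : ℝ) else 0) *
            (if m1 + (-1) ^ l = -m2 then (1 : ℝ) else 0) : ℝ) : ℂ) := by
  have hm1 : |m1| ≤ l1 := by rwa [Int.abs_eq_natAbs, Nat.cast_le]
  have hm2 : |m2| ≤ l2 := by rwa [Int.abs_eq_natAbs, Nat.cast_le]
  rw [← sphHarmZ_natCast hm1, ← sphHarmZ_natCast hm2,
    sphereIntegral_mul_sphHarmZ_mul_sphHarmZ hm1 hm2]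
  simp only [Finset.mul_sum, Complex.ofReal_sum]
  refine Finset.sum_congr rfl fun k hk ↦ Finset.sum_congr rfl fun j hj ↦
    Finset.sum_congr rfl fun ν _ ↦ ?_
  have hdeg : (l1 : ℤ) + (-1) ^ j = l2 + (-1) ^ k ↔
      (l1 : ℤ) + (if k = 1 then 1 else 0) - (if j = 1 then 1 else 0) =
        (l2 : ℤ) - (if k = 1 then 1 else 0) + (if j = 1 then 1 else 0) := by
    rw [Finset.mem_range] at hk hj
    interval_cases k <;> interval_cases j <;> simp [← sub_eq_add_neg]
  rw [Complex.ofReal_mul, mul_right_comm, eta_mul_sphereIntegral_sphHarmZ_mul hk hm2,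
    zpow_add_one₀ (by norm_num)]
  simp only [← hdeg, ite_and]
  split_ifs <;> push_cast <;> ring
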